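/- Let A ∈ ℝ^{m×n} have unit ℓ₂-norm columns and satisfy the RIP of order K+1 with constant δ ∈ [0,1). Let x ∈ ℝ^n be K-sparse with support S = supp(x), let S' be a proper subset of S with |S'| = k, set r = P_{S'}^⊥ A x, let j ∈ {1,…,n} \ S, and put q = √(K−k) · ‖x_{S\S'}‖₂ · |⟨r, a_j⟩| / ‖P_{S'}^⊥ a_j‖₂. Then ‖r‖₂² − q ≥ (1 − (1 + (K−k)/4)·δ) · ‖x_{S\S'}‖₂². -/

import Mathlib

open Finset

noncomputable section

/-- The support of a vector as a `Finset`. -/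
def vsupp {n : ℕ} (x : Fin n → ℝ) : Finset (Fin n) :=
  Finset.univ.filter (fun i => x i ≠ 0)

/-- `A` satisfies the restricted isometry property of order `r` with constant `δ`. -/
def RIP {m n : ℕ} (A : Matrix (Fin m) (Fin n) ℝ) (r : ℕ) (δ : ℝ) : Prop :=
  ∀ x : Fin n → ℝ, (vsupp x).card ≤ r →
    (1 - δ) * (∑ i, x i ^ 2) ≤ (∑ i, (A.mulVec x) i ^ 2) ∧
      (∑ i, (A.mulVec x) i ^ 2) ≤ (1 + δ) * (∑ i, x i ^ 2)

/-- The `j`-th column of `A`. -/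
def col {m n : ℕ} (A : Matrix (Fin m) (Fin n) ℝ) (j : Fin n) : Fin m → ℝ :=
  fun i => A i j

/-- Euclidean dot product. -/
def dot {m : ℕ} (u v : Fin m → ℝ) : ℝ := ∑ i, u i * v i

/-- Squared Euclidean norm. -/
def nsq {m : ℕ} (v : Fin m → ℝ) : ℝ := ∑ i, v i ^ 2

/-- Euclidean norm. -/
def enorm {m : ℕ} (v : Fin m → ℝ) : ℝ := Real.sqrt (nsq v)

/-- Squared norm of the restriction of `x` to `T`. -/
def rsq {n : ℕ} (x : Fin n → ℝ) (T : Finset (Fin n)) : ℝ := ∑ i ∈ T, x i ^ 2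

/-- Norm of the restriction of `x` to `T`. -/
def rnorm {n : ℕ} (x : Fin n → ℝ) (T : Finset (Fin n)) : ℝ := Real.sqrt (rsq x T)

/-- Span of the columns of `A` indexed by `J`. -/
def colSpan {m n : ℕ} (A : Matrix (Fin m) (Fin n) ℝ) (J : Finset (Fin n)) :
    Submodule ℝ (EuclideanSpace ℝ (Fin m)) :=
  Submodule.span ℝ ((fun j => (WithLp.equiv 2 (Fin m → ℝ)).symm (col A j)) '' (J : Set (Fin n)))

/-- The projection `P_J^⊥ v` of `v` onto the orthogonal complement of the span of the
columns of `A` indexed by `J`. -/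
def projPerp {m n : ℕ} (A : Matrix (Fin m) (Fin n) ℝ) (J : Finset (Fin n)) (v : Fin m → ℝ) :
    Fin m → ℝ :=
  v - WithLp.equiv 2 (Fin m → ℝ)
    ((Submodule.orthogonalProjectionOnto (colSpan A J) ((WithLp.equiv 2 (Fin m → ℝ)).symm v) :
      EuclideanSpace ℝ (Fin m)))

/-- The OLS selection criterion value for index `j`, given measurements `y` and current
estimated support `Sk`. -/
def olsQuot {m n : ℕ} (A : Matrix (Fin m) (Fin n) ℝ) (y : Fin m → ℝ) (Sk : Finset (Fin n))
    (j : Fin n) : ℝ :=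
  |dot (projPerp A Sk y) (col A j)| / _root_.enorm (projPerp A Sk (col A j))

/-- The estimated support of OLS after `k` iterations (ties broken towards smaller index). -/
def olsSupp {m n : ℕ} (A : Matrix (Fin m) (Fin n) ℝ) (y : Fin m → ℝ) : ℕ → Finset (Fin n)
  | 0 => ∅
  | k + 1 =>
    let Sk := olsSupp A y k
    let cand := (Finset.univ \ Sk).filter
      (fun j => ∀ i ∈ Finset.univ \ Sk, olsQuot A y Sk i ≤ olsQuot A y Sk j)
    if h : cand.Nonempty then insert (cand.min' h) Sk else Sk

/-- The constant `C_K` from the paper. -/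
def CK (K : ℕ) : ℝ :=
  if K = 1 then 1 else if K = 2 then 2/3 else if K = 3 then 4/7 else 1 / Real.sqrt K

/-!
Put `r = P_{S'}^⊥ A x`, `p = P_{S'}^⊥ a_j`, `X = ‖x_{S \ S'}‖²` and `c = K - k`. For every real `t`,
the vector `r + t p` is `A z` for some `z` which is supported in `S ∪ {j}` and agrees with
`x + t e_j` off `S'`, so the RIP gives `μ (X + t²) ≤ ‖r + t p‖²` with `μ = max (1 - δ) 0`. Since
`⟨r, a_j⟩ = ⟨r, p⟩`, the choice `|t| = √(c X) / (2 ‖p‖)`, with the sign opposite to that of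
`⟨r, p⟩`, turns the right-hand side into `‖r‖² - q + c X / 4`, while `t² ≥ c X / 4` because
`‖p‖ ≤ 1`. Hence `‖r‖² - q ≥ μ (1 + c / 4) X - c X / 4`, and `μ ≥ 1 - δ`.
-/

open WithLp
open scoped Matrix RealInnerProductSpace

section InnerProductSpace

variable {E : Type*} [NormedAddCommGroup E] [InnerProductSpace ℝ E] {r p : E} {μ X : ℝ}

lemma le_norm_sq_sub_mul_inner_div_norm (hμ : 0 ≤ μ) (hp : ‖p‖ ≤ 1)
    (h : ∀ t : ℝ, μ * (X + t ^ 2) ≤ ‖r + t • p‖ ^ 2) (s : ℝ) :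
    μ * X - (1 - μ) * s ^ 2 / 4 ≤ ‖r‖ ^ 2 - s * ⟪r, p⟫ / ‖p‖ := by
  rcases eq_or_ne p 0 with rfl | hp0
  · have hs := h (s / 2)
    simp only [smul_zero, add_zero] at hs
    simp only [norm_zero, div_zero]
    linarith [sq_nonneg s]
  · have hpos : 0 < ‖p‖ := norm_pos_iff.2 hp0
    set t : ℝ := -(s / (2 * ‖p‖)) with ht
    have ht_norm : t * ‖p‖ = -(s / 2) := by rw [ht]; field_simp
    have ht_sq : s ^ 2 / 4 ≤ t ^ 2 :=
      calc s ^ 2 / 4 = t ^ 2 * ‖p‖ ^ 2 := by rw [← mul_pow, ht_norm]; ring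
        _ ≤ t ^ 2 := mul_le_of_le_one_right (sq_nonneg t) (pow_le_one₀ hpos.le hp)
    have h_expand : ‖r + t • p‖ ^ 2 = ‖r‖ ^ 2 - s * ⟪r, p⟫ / ‖p‖ + s ^ 2 / 4 := by
      rw [norm_add_sq_real, real_inner_smul_right, norm_smul, mul_pow, Real.norm_eq_abs, sq_abs,
        ← mul_pow, ht_norm, ht]
      field_simp
      ring
    have h_lower : μ * (X + s ^ 2 / 4) ≤ ‖r + t • p‖ ^ 2 :=
      (mul_le_mul_of_nonneg_left (by gcongr) hμ).trans (h t)
    linarith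

lemma le_norm_sq_sub_mul_abs_inner_div_norm (hμ : 0 ≤ μ) (hp : ‖p‖ ≤ 1)
    (h : ∀ t : ℝ, μ * (X + t ^ 2) ≤ ‖r + t • p‖ ^ 2) (s : ℝ) :
    μ * X - (1 - μ) * s ^ 2 / 4 ≤ ‖r‖ ^ 2 - s * |⟪r, p⟫| / ‖p‖ := by
  rcases abs_choice ⟪r, p⟫ with habs | habs <;> rw [habs]
  · exact le_norm_sq_sub_mul_inner_div_norm hμ hp h s
  · simpa only [neg_sq, neg_mul, mul_neg] using le_norm_sq_sub_mul_inner_div_norm hμ hp h (-s)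

lemma inner_starProjection_starProjection (U : Submodule ℝ E) [U.HasOrthogonalProjection]
    (u v : E) : ⟪U.starProjection u, U.starProjection v⟫ = ⟪U.starProjection u, v⟫ := by
  rw [← U.inner_starProjection_left_eq_right, U.starProjection_eq_self_iff.2
    (U.starProjection_apply_mem u)]

end InnerProductSpace

section Euclidean

variable {m : ℕ}

lemma nsq_nonneg (v : Fin m → ℝ) : 0 ≤ nsq v :=
  sum_nonneg fun _ _ => sq_nonneg _

lemma norm_toLp_sq (v : Fin m → ℝ) : ‖toLp 2 v‖ ^ 2 = nsq v :=
  EuclideanSpace.real_norm_sq_eq _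

lemma norm_toLp (v : Fin m → ℝ) : ‖toLp 2 v‖ = _root_.enorm v := by
  rw [_root_.enorm, ← norm_toLp_sq, Real.sqrt_sq (norm_nonneg _)]

lemma inner_toLp (u v : Fin m → ℝ) : ⟪toLp 2 u, toLp 2 v⟫ = dot u v := by
  simp [dot, PiLp.inner_apply, mul_comm]

end Euclidean

section RestrictedNorm

variable {n : ℕ} {x : Fin n → ℝ} {S T : Finset (Fin n)} {j : Fin n}

lemma rsq_nonneg (x : Fin n → ℝ) (T : Finset (Fin n)) : 0 ≤ rsq x T :=
  sum_nonneg fun _ _ => sq_nonneg _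

lemma rsq_mono (x : Fin n → ℝ) (hST : S ⊆ T) : rsq x S ≤ rsq x T :=
  sum_le_sum_of_subset_of_nonneg hST fun _ _ _ => sq_nonneg _

lemma rsq_add_single (hxj : x j = 0) (hj : j ∈ T) (t : ℝ) :
    rsq (x + Pi.single j t) T = rsq x T + t ^ 2 := by
  have h_sq (i : Fin n) : (x + Pi.single j t : Fin n → ℝ) i ^ 2 =
      x i ^ 2 + (Pi.single j (t ^ 2) : Fin n → ℝ) i := by
    rcases eq_or_ne i j with rfl | hij
    · simp [hxj]
    · simp [hij]
  simp only [rsq, h_sq, sum_add_distrib, sum_pi_single', if_pos hj]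

lemma vsupp_subset_iff : vsupp x ⊆ S ↔ ∀ i ∉ S, x i = 0 := by
  simp only [vsupp, subset_iff, mem_filter_univ, ne_eq, not_imp_comm]

lemma vsupp_add_single_subset (hx : vsupp x ⊆ S) (j : Fin n) (t : ℝ) :
    vsupp (x + Pi.single j t) ⊆ insert j S := by
  refine vsupp_subset_iff.2 fun i hi => ?_
  obtain ⟨hij, hiS⟩ := not_or.1 (mt mem_insert.2 hi)
  simp [vsupp_subset_iff.1 hx i hiS, hij]

end RestrictedNorm

section Projection

variable {m n : ℕ} (A : Matrix (Fin m) (Fin n) ℝ) (J : Finset (Fin n))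

lemma toLp_projPerp (v : Fin m → ℝ) :
    toLp 2 (projPerp A J v) = (colSpan A J)ᗮ.starProjection (toLp 2 v) := by
  rw [Submodule.starProjection_orthogonal_val]
  rfl

lemma norm_toLp_projPerp_le (v : Fin m → ℝ) : ‖toLp 2 (projPerp A J v)‖ ≤ ‖toLp 2 v‖ := by
  rw [toLp_projPerp]
  exact Submodule.norm_starProjection_apply_le _ _

lemma inner_toLp_projPerp_toLp_projPerp (u v : Fin m → ℝ) :
    ⟪toLp 2 (projPerp A J u), toLp 2 (projPerp A J v)⟫ = dot (projPerp A J u) v := by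
  rw [toLp_projPerp, toLp_projPerp, inner_starProjection_starProjection, ← toLp_projPerp,
    inner_toLp]

lemma projPerp_add_smul (u v : Fin m → ℝ) (t : ℝ) :
    projPerp A J (u + t • v) = projPerp A J u + t • projPerp A J v := by
  apply toLp_injective 2
  simp only [toLp_projPerp, toLp_add, toLp_smul, map_add, map_smul]

lemma exists_projPerp_eq_sub_mulVec (v : Fin m → ℝ) :
    ∃ w : Fin n → ℝ, vsupp w ⊆ J ∧ projPerp A J v = v - A *ᵥ w := by
  obtain ⟨c, hc⟩ := (Submodule.mem_span_image_finset_iff_exists_fun' ℝ).1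
    ((colSpan A J).orthogonalProjectionOnto (toLp 2 v)).2
  refine ⟨fun i => if i ∈ J then c i else 0,
    vsupp_subset_iff.2 fun i hi => if_neg hi, congrArg (v - ·) ?_⟩
  change ofLp ((colSpan A J).orthogonalProjectionOnto (toLp 2 v) : EuclideanSpace ℝ (Fin m)) = _
  rw [← hc]
  ext i
  simp [Matrix.mulVec, dotProduct, col, mul_comm]

end Projection

section RIP

variable {m n N : ℕ} {A : Matrix (Fin m) (Fin n) ℝ} {δ : ℝ}

lemma RIP.max_mul_nsq_le_nsq_mulVec (hA : RIP A N δ) {z : Fin n → ℝ} (hz : (vsupp z).card ≤ N) :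
    max (1 - δ) 0 * nsq z ≤ nsq (A *ᵥ z) := by
  rw [max_mul_of_nonneg _ _ (nsq_nonneg z), zero_mul]
  exact max_le (hA z hz).1 (nsq_nonneg _)

lemma RIP.max_mul_rsq_compl_le_nsq_projPerp (hA : RIP A N δ) {z : Fin n → ℝ}
    {J T : Finset (Fin n)} (hz : vsupp z ⊆ T) (hJ : J ⊆ T) (hT : T.card ≤ N) :
    max (1 - δ) 0 * rsq z Jᶜ ≤ nsq (projPerp A J (A *ᵥ z)) := by
  obtain ⟨w, hwJ, hw⟩ := exists_projPerp_eq_sub_mulVec A J (A *ᵥ z)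
  rw [vsupp_subset_iff] at hz hwJ
  have hzw : vsupp (z - w) ⊆ T := vsupp_subset_iff.2 fun i hi => by
    rw [Pi.sub_apply, hz i hi, hwJ i (mt (@hJ i) hi), sub_zero]
  have h_off : rsq z Jᶜ = rsq (z - w) Jᶜ := sum_congr rfl fun i hi => by
    rw [Pi.sub_apply, hwJ i (mem_compl.1 hi), sub_zero]
  calc max (1 - δ) 0 * rsq z Jᶜ ≤ max (1 - δ) 0 * nsq (z - w) := by
        rw [h_off]
        exact mul_le_mul_of_nonneg_left (rsq_mono _ (subset_univ _)) (le_max_right _ _)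
    _ ≤ nsq (A *ᵥ (z - w)) := hA.max_mul_nsq_le_nsq_mulVec ((card_le_card hzw).trans hT)
    _ = nsq (projPerp A J (A *ᵥ z)) := by rw [hw, Matrix.mulVec_sub]

lemma RIP.max_mul_rsq_sdiff_add_sq_le_nsq_projPerp_add_smul (hA : RIP A N δ)
    {x : Fin n → ℝ} {S S' : Finset (Fin n)} (hx : vsupp x ⊆ S) (hS : S.card < N) (hS' : S' ⊆ S)
    {j : Fin n} (hj : j ∉ S) (t : ℝ) :
    max (1 - δ) 0 * (rsq x (S \ S') + t ^ 2) ≤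
      nsq (projPerp A S' (A *ᵥ x) + t • projPerp A S' (col A j)) := by
  have h_mulVec : A *ᵥ (x + Pi.single j t) = A *ᵥ x + t • col A j := by
    rw [Matrix.mulVec_add, Matrix.mulVec_single, op_smul_eq_smul]
    rfl
  have h_rsq : rsq x (S \ S') + t ^ 2 ≤ rsq (x + Pi.single j t) S'ᶜ := by
    rw [rsq_add_single (vsupp_subset_iff.1 hx j hj) (mem_compl.2 (mt (@hS' j) hj))]
    gcongr
    exact rsq_mono x fun i hi => mem_compl.2 (mem_sdiff.1 hi).2
  rw [← projPerp_add_smul, ← h_mulVec]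
  exact (mul_le_mul_of_nonneg_left h_rsq (le_max_right _ _)).trans
    (hA.max_mul_rsq_compl_le_nsq_projPerp (vsupp_add_single_subset hx j t)
      (hS'.trans (subset_insert j S)) ((card_insert_le j S).trans hS))

end RIP

-- For `1 ≤ δ` the denominator may vanish; the quotient is then `0 / 0 = 0`.
theorem stmt11_general {m n N : ℕ} {A : Matrix (Fin m) (Fin n) ℝ} {δ : ℝ} (hRIP : RIP A N δ)
    {x : Fin n → ℝ} {S S' : Finset (Fin n)} (hx : vsupp x ⊆ S) (hS : S.card < N) (hS' : S' ⊆ S)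
    {j : Fin n} (hj : j ∉ S) (hcol : nsq (col A j) ≤ 1) {c : ℝ} (hc : 0 ≤ c) :
    (1 - (1 + c / 4) * δ) * rsq x (S \ S') ≤
      nsq (projPerp A S' (A *ᵥ x)) -
        √c * rnorm x (S \ S') * |dot (projPerp A S' (A *ᵥ x)) (col A j)| /
          _root_.enorm (projPerp A S' (col A j)) := by
  have h_norm : ‖toLp 2 (projPerp A S' (col A j))‖ ≤ 1 := by
    refine (norm_toLp_projPerp_le A S' _).trans ?_
    rwa [← sq_le_one_iff₀ (norm_nonneg _), norm_toLp_sq]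
  have h_lower (t : ℝ) : max (1 - δ) 0 * (rsq x (S \ S') + t ^ 2) ≤
      ‖toLp 2 (projPerp A S' (A *ᵥ x)) + t • toLp 2 (projPerp A S' (col A j))‖ ^ 2 := by
    rw [← toLp_smul, ← toLp_add, norm_toLp_sq]
    exact hRIP.max_mul_rsq_sdiff_add_sq_le_nsq_projPerp_add_smul hx hS hS' hj t
  have h_sq : (√c * rnorm x (S \ S')) ^ 2 = c * rsq x (S \ S') := by
    rw [rnorm, mul_pow, Real.sq_sqrt hc, Real.sq_sqrt (rsq_nonneg _ _)]
  have h_main := le_norm_sq_sub_mul_abs_inner_div_norm (le_max_right _ _) h_norm h_lower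
    (√c * rnorm x (S \ S'))
  rw [h_sq, inner_toLp_projPerp_toLp_projPerp, norm_toLp_sq, norm_toLp] at h_main
  have hX := rsq_nonneg x (S \ S')
  calc (1 - (1 + c / 4) * δ) * rsq x (S \ S')
      = (1 - δ) * ((1 + c / 4) * rsq x (S \ S')) - c * rsq x (S \ S') / 4 := by ring
    _ ≤ max (1 - δ) 0 * ((1 + c / 4) * rsq x (S \ S')) - c * rsq x (S \ S') / 4 := by
        gcongr
        exact le_max_left _ _
    _ = max (1 - δ) 0 * rsq x (S \ S') - (1 - max (1 - δ) 0) * (c * rsq x (S \ S')) / 4 := by ring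
    _ ≤ _ := h_main

/-- under unit-norm columns and RIP of order `K+1` with `δ ∈ [0,1)`,
with `q = √(K−k) ‖x_{S\S'}‖₂ |⟨r, a_j⟩| / ‖P_{S'}^⊥ a_j‖₂` and `k = |S'|`,
`‖r‖₂² − q ≥ (1 − (1 + (K−k)/4) δ) ‖x_{S\S'}‖₂²`. -/
theorem stmt11 {m n K : ℕ} (A : Matrix (Fin m) (Fin n) ℝ) (δ : ℝ)
    (hδ0 : 0 ≤ δ) (hδ1 : δ < 1)
    (hcols : ∀ j, nsq (col A j) = 1)
    (hRIP : RIP A (K + 1) δ)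
    (x : Fin n → ℝ) (S : Finset (Fin n)) (hS : vsupp x = S) (hK : S.card ≤ K)
    (S' : Finset (Fin n)) (hS' : S' ⊂ S) (k : ℕ) (hk : S'.card = k)
    (r : Fin m → ℝ) (hr : r = projPerp A S' (A.mulVec x))
    (j : Fin n) (hj : j ∉ S)
    (q : ℝ) (hq : q = Real.sqrt ((K : ℝ) - (k : ℝ)) * rnorm x (S \ S') * |dot r (col A j)| /
      _root_.enorm (projPerp A S' (col A j))) :
    nsq r - q ≥ (1 - (1 + ((K : ℝ) - (k : ℝ)) / 4) * δ) * rsq x (S \ S') := by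
  have hkK : S'.card ≤ K := (card_le_card hS'.subset).trans hK
  rw [hq, hr, ← hk]
  exact stmt11_general hRIP hS.subset (Nat.lt_succ_of_le hK) hS'.subset hj (hcols j).le
    (sub_nonneg.2 (Nat.cast_le.2 hkK))
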